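/- arXiv:2306.10810 — 5 statements merged into one kernel-verified Lean document; each statement's English description precedes it below -/
import Mathlib

section
/- Let X be an extreme point of the set T̃(l,u,l',u',L,U) (viewed as a subset of the space of m×n real matrices). Then the number of row indices i for which l_i < Σ_{j=1}^n x_{ij} < u_i holds strictly is at most 1. -/
/-!
A nonnegative matrix of rank at most one with a nonzero row has the form `X i j = r i * x j`, where
`r i` is the `i`-th row sum and `x` is a probability vector (`exists_rowSum_mul`). If two distinct
rows `p`, `q` had sums strictly between their bounds, then transferring a small amount `s` of mass
from row `q` to row `p` along `x`, that is replacing `r` by `r + s (e_p - e_q)`, would preserve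
rank at most one, all column sums and the total sum, and keep the row sums within their bounds
(nonnegativity is then automatic since `0 ≤ l`). Doing this with `s = t` and `s = -t` exhibits `X`
as the midpoint of two other points of the set, contradicting extremality.
-/

/-- A real matrix of rank at most one is an outer product of two vectors. -/
lemma exists_eq_mul_of_rank_le_one {m n : ℕ} (X : Matrix (Fin m) (Fin n) ℝ) (h : X.rank ≤ 1) :
    ∃ (w : Fin m → ℝ) (v : Fin n → ℝ), ∀ i j, X i j = w i * v j := by
  rw [Matrix.rank_eq_finrank_span_row] at h
  obtain ⟨v, hv⟩ := finrank_le_one_iff.mp h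
  have key : ∀ i, ∃ c : ℝ, ∀ j, X i j = c * (v : Fin n → ℝ) j := by
    intro i
    obtain ⟨c, hc⟩ := hv ⟨X.row i, Submodule.subset_span ⟨i, rfl⟩⟩
    refine ⟨c, fun j => ?_⟩
    have := congrFun (congrArg Subtype.val hc) j
    simpa using this.symm
  choose w hw using key
  exact ⟨w, v, hw⟩

/-- The outer-product form normalised so that the left factor is the vector of row sums. -/
lemma exists_rowSum_mul {m n : ℕ} (X : Matrix (Fin m) (Fin n) ℝ) (h : X.rank ≤ 1)
    (h0 : ∀ i j, 0 ≤ X i j) (p : Fin m) (hp : 0 < ∑ j, X p j) :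
    ∃ x : Fin n → ℝ, (∀ j, 0 ≤ x j) ∧ ∑ j, x j = 1 ∧ ∀ i j, X i j = (∑ k, X i k) * x j := by
  obtain ⟨w, v, hwv⟩ := exists_eq_mul_of_rank_le_one X h
  refine ⟨fun j => X p j / ∑ k, X p k, fun j => div_nonneg (h0 p j) hp.le, ?_, fun i j => ?_⟩
  · rw [← Finset.sum_div, div_self hp.ne']
  · rw [mul_div_assoc', eq_div_iff hp.ne']
    simp only [hwv, ← Finset.mul_sum]
    ring


theorem extremePoint_rows_strictly_between_le_one
    (m n : ℕ) (hm : 0 < m) (hn : 0 < n)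
    (l u : Fin m → ℝ) (l' u' : Fin n → ℝ) (L U : ℝ)
    (hl : ∀ i, 0 ≤ l i) (hlu : ∀ i, l i ≤ u i)
    (hl' : ∀ j, 0 ≤ l' j) (hlu' : ∀ j, l' j ≤ u' j)
    (hL : 0 ≤ L) (hLU : L ≤ U)
    (X : Matrix (Fin m) (Fin n) ℝ)
    (hX : X ∈ Set.extremePoints ℝ
      {Y : Matrix (Fin m) (Fin n) ℝ |
        (∀ i j, 0 ≤ Y i j) ∧
        (∀ i, l i ≤ ∑ j, Y i j ∧ ∑ j, Y i j ≤ u i) ∧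
        (∀ j, l' j ≤ ∑ i, Y i j ∧ ∑ i, Y i j ≤ u' j) ∧
        (L ≤ ∑ i, ∑ j, Y i j ∧ ∑ i, ∑ j, Y i j ≤ U) ∧
        Y.rank ≤ 1}) :
    {i : Fin m | l i < ∑ j, X i j ∧ ∑ j, X i j < u i}.ncard ≤ 1 := by
  obtain ⟨⟨h0, hrow, hcol, htot, hrk⟩, hext⟩ := hX
  rw [Set.ncard_le_one (Set.toFinite _)]
  rintro p ⟨hp1, hp2⟩ q ⟨hq1, hq2⟩
  by_contra hpq
  obtain ⟨x, hx0, hx1, hX⟩ := exists_rowSum_mul X hrk h0 p ((hl p).trans_lt hp1)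
  set r : Fin m → ℝ := fun i => ∑ k, X i k with hr
  obtain ⟨t, ht0, htp1, htp2, htq1, htq2⟩ : ∃ t > 0,
      t ≤ r p - l p ∧ t ≤ u p - r p ∧ t ≤ r q - l q ∧ t ≤ u q - r q := by
    refine ⟨min (min (r p - l p) (u p - r p)) (min (r q - l q) (u q - r q)), ?_, ?_, ?_, ?_, ?_⟩
    · simp only [gt_iff_lt, lt_min_iff, sub_pos]
      exact ⟨⟨hp1, hp2⟩, hq1, hq2⟩
    all_goals simp
  let d : Fin m → ℝ := Pi.single p 1 - Pi.single q 1
  have hdp : d p = 1 := by simp [d, hpq]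
  have hdq : d q = -1 := by simp [d, Ne.symm hpq]
  have hd : ∀ i, i ≠ p → i ≠ q → d i = 0 := fun i h1 h2 => by simp [d, h1, h2]
  have hdsum : ∑ i, d i = 0 := by simp [d]
  let Y : ℝ → Matrix (Fin m) (Fin n) ℝ := fun s => Matrix.vecMulVec (fun i => r i + s * d i) x
  have hY : ∀ s i j, Y s i j = X i j + s * d i * x j := by
    intro s i j
    rw [hX i j]
    simp only [Y, Matrix.vecMulVec_apply]
    ring
  have hYrow : ∀ s i, ∑ j, Y s i j = r i + s * d i := by
    intro s i
    simp only [Y, Matrix.vecMulVec_apply]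
    rw [← Finset.mul_sum, hx1, mul_one]
  have hYcol : ∀ s j, ∑ i, Y s i j = ∑ i, X i j := by
    intro s j
    simp only [hY]
    rw [Finset.sum_add_distrib, ← Finset.sum_mul, ← Finset.mul_sum, hdsum]
    simp
  have hbound : ∀ s, |s| ≤ t → ∀ i, l i ≤ r i + s * d i ∧ r i + s * d i ≤ u i := by
    intro s hs i
    obtain ⟨hs1, hs2⟩ := abs_le.mp hs
    by_cases h1 : i = p
    · subst h1
      rw [hdp]
      constructor <;> linarith
    by_cases h2 : i = q
    · subst h2
      rw [hdq]
      constructor <;> linarith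
    rw [hd i h1 h2, mul_zero, add_zero]
    exact hrow i
  have hmem : ∀ s, |s| ≤ t → (∀ i j, 0 ≤ Y s i j) ∧
      (∀ i, l i ≤ ∑ j, Y s i j ∧ ∑ j, Y s i j ≤ u i) ∧
      (∀ j, l' j ≤ ∑ i, Y s i j ∧ ∑ i, Y s i j ≤ u' j) ∧
      (L ≤ ∑ i, ∑ j, Y s i j ∧ ∑ i, ∑ j, Y s i j ≤ U) ∧ (Y s).rank ≤ 1 := by
    intro s hs
    refine ⟨fun i j => ?_, fun i => ?_, fun j => ?_, ?_, Matrix.rank_vecMulVec_le _ _⟩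
    · exact mul_nonneg ((hl i).trans (hbound s hs i).1) (hx0 j)
    · rw [hYrow]
      exact hbound s hs i
    · rw [hYcol]
      exact hcol j
    · have : ∑ i, ∑ j, Y s i j = ∑ i, ∑ j, X i j := by
        simp only [hYrow]
        rw [Finset.sum_add_distrib, ← Finset.mul_sum, hdsum, mul_zero, add_zero]
      rw [this]
      exact htot
  have hseg : X ∈ openSegment ℝ (Y t) (Y (-t)) := by
    refine ⟨1 / 2, 1 / 2, by norm_num, by norm_num, by norm_num, ?_⟩
    ext i j
    simp only [Matrix.add_apply, Matrix.smul_apply, hY, smul_eq_mul]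
    ring
  have heq : Y t = X := hext (hmem t (abs_of_pos ht0).le)
    (hmem (-t) (by rw [abs_neg, abs_of_pos ht0])) hseg
  -- Row `p` of `Y t` has sum `r p + t`, so `Y t` differs from `X`.
  have h1 := hYrow t p
  rw [heq, hdp] at h1
  have h2 : r p = ∑ j, X p j := rfl
  linarith
end

section
/- Let X be an extreme point of the set T̃(l,u,l',u',L,U) (viewed as a subset of the space of m×n real matrices). Then the number of column indices j for which l'_j < Σ_{i=1}^m x_{ij} < u'_j holds strictly is at most 1. -/
/-!
If two distinct columns `a`, `b` of `X` had sums strictly between their bounds, then `X` would not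
be extreme: transfer a small mass `t` from column `b` to column `a` along the direction of column
`a` normalised to sum `1`, for `t = ε` and `t = -ε`. Row sums and the total do not change, the two
column sums move by `±t`, and the transfer is a right multiplication of `X`, so the rank does not
grow (`rank_transferMass_le`). Nonnegativity is where rank at most one enters
(`col_mul_colSum_eq`): columns `a` and `b` are proportional, so both stay nonnegative as long as
`|t|` is at most each of the two column sums. Finally `X` is the midpoint of the two perturbed
matrices.
-/

open Matrix in
/-- In a matrix of rank at most one, any two columns are proportional, with the column sums as
coefficients. -/
theorem col_mul_colSum_eq {m n : ℕ} (X : Matrix (Fin m) (Fin n) ℝ) (hX : X.rank ≤ 1)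
    (a b : Fin n) (i : Fin m) :
    X i b * ∑ k, X k a = X i a * ∑ k, X k b := by
  rw [rank_eq_finrank_span_cols, finrank_le_one_iff] at hX
  obtain ⟨v, hv⟩ := hX
  have key : ∀ j, ∃ c : ℝ, ∀ i, X i j = c * (v : Fin m → ℝ) i := fun j => by
    obtain ⟨c, hc⟩ := hv ⟨X.col j, Submodule.subset_span ⟨j, rfl⟩⟩
    refine ⟨c, fun i => ?_⟩
    have := congrFun (congrArg Subtype.val hc) i
    simpa using this.symm
  obtain ⟨p, hp⟩ := key a
  obtain ⟨q, hq⟩ := key b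
  simp only [hp, hq, ← Finset.mul_sum]
  ring

/-- The direction `e_a - e_b` in the space of column indices. -/
def transferDir {n : ℕ} (a b : Fin n) (j : Fin n) : ℝ :=
  (if j = a then 1 else 0) - (if j = b then 1 else 0)

/-- The matrix obtained from `X` by adding `t` times column `a`, normalised to have sum `1`, to
column `a` and subtracting it from column `b`. The normalisation is meaningful only when column `a`
has nonzero sum. -/
noncomputable def transferMass {m n : ℕ} (X : Matrix (Fin m) (Fin n) ℝ) (a b : Fin n) (t : ℝ) :
    Matrix (Fin m) (Fin n) ℝ :=
  Matrix.of fun i j => X i j + t * (X i a / ∑ k, X k a) * transferDir a b j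

theorem rank_transferMass_le {m n : ℕ} (X : Matrix (Fin m) (Fin n) ℝ) (a b : Fin n) (t : ℝ) :
    (transferMass X a b t).rank ≤ X.rank := by
  have : transferMass X a b t = X * (1 + Matrix.vecMulVec
      (Pi.single a (t / ∑ k, X k a)) (transferDir a b)) := by
    ext i j
    rw [Matrix.mul_add, Matrix.mul_one, Matrix.mul_vecMulVec]
    simp [transferMass, Matrix.vecMulVec_apply]
    ring
  rw [this]
  exact Matrix.rank_mul_le_left _ _

theorem sum_row_transferMass {m n : ℕ} (X : Matrix (Fin m) (Fin n) ℝ) (a b : Fin n) (t : ℝ)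
    (i : Fin m) : ∑ j, transferMass X a b t i j = ∑ j, X i j := by
  simp [transferMass, transferDir, Finset.sum_add_distrib, ← Finset.mul_sum]

theorem sum_col_transferMass {m n : ℕ} (X : Matrix (Fin m) (Fin n) ℝ) (a b : Fin n) (t : ℝ)
    (ha : 0 < ∑ k, X k a) (j : Fin n) :
    ∑ i, transferMass X a b t i j = ∑ i, X i j + t * transferDir a b j := by
  simp only [transferMass, Matrix.of_apply, Finset.sum_add_distrib, ← Finset.mul_sum,
    ← Finset.sum_mul, ← Finset.sum_div, div_self ha.ne', mul_one]

/-- Proportionality of columns `a` and `b` makes column `b` the sum of column `b` times the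
normalised column `a`, so removing mass at most that sum keeps its entries nonnegative. -/
theorem transferMass_nonneg {m n : ℕ} (X : Matrix (Fin m) (Fin n) ℝ) (hX : X.rank ≤ 1)
    (h0 : ∀ i j, 0 ≤ X i j) (a b : Fin n) (hab : a ≠ b) (t : ℝ) (ha : 0 < ∑ k, X k a)
    (hta : -t ≤ ∑ k, X k a) (htb : t ≤ ∑ k, X k b) (i : Fin m) (j : Fin n) :
    0 ≤ transferMass X a b t i j := by
  have hd : 0 ≤ X i a / ∑ k, X k a := div_nonneg (h0 i a) ha.le
  have hA : X i a = X i a / (∑ k, X k a) * ∑ k, X k a := by field_simp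
  have hB : X i b = X i a / (∑ k, X k a) * ∑ k, X k b := by
    have := col_mul_colSum_eq X hX a b i
    field_simp
    linarith
  simp only [transferMass, transferDir, Matrix.of_apply]
  by_cases hja : j = a
  · subst hja
    simp only [hab, if_true, if_false]
    have := mul_le_mul_of_nonneg_left hta hd
    linarith
  · by_cases hjb : j = b
    · subst hjb
      simp only [hja, if_true, if_false]
      have := mul_le_mul_of_nonneg_left htb hd
      linarith
    · simpa [hja, hjb] using h0 i j

theorem extremePoint_cols_strictly_between_le_one
    (m n : ℕ) (hm : 0 < m) (hn : 0 < n)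
    (l u : Fin m → ℝ) (l' u' : Fin n → ℝ) (L U : ℝ)
    (hl : ∀ i, 0 ≤ l i) (hlu : ∀ i, l i ≤ u i)
    (hl' : ∀ j, 0 ≤ l' j) (hlu' : ∀ j, l' j ≤ u' j)
    (hL : 0 ≤ L) (hLU : L ≤ U)
    (X : Matrix (Fin m) (Fin n) ℝ)
    (hX : X ∈ Set.extremePoints ℝ
      {Y : Matrix (Fin m) (Fin n) ℝ |
        (∀ i j, 0 ≤ Y i j) ∧
        (∀ i, l i ≤ ∑ j, Y i j ∧ ∑ j, Y i j ≤ u i) ∧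
        (∀ j, l' j ≤ ∑ i, Y i j ∧ ∑ i, Y i j ≤ u' j) ∧
        (L ≤ ∑ i, ∑ j, Y i j ∧ ∑ i, ∑ j, Y i j ≤ U) ∧
        Y.rank ≤ 1}) :
    {j : Fin n | l' j < ∑ i, X i j ∧ ∑ i, X i j < u' j}.ncard ≤ 1 := by
  obtain ⟨⟨h0, hr, hc, ht, hrk⟩, hext⟩ := mem_extremePoints_iff_left.1 hX
  rw [Set.ncard_le_one]
  rintro a ⟨ha1, ha2⟩ b ⟨hb1, hb2⟩
  by_contra hab
  have hca : 0 < ∑ i, X i a := (hl' a).trans_lt ha1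
  obtain ⟨ε, hε, hε'⟩ : ∃ ε : ℝ, 0 < ε ∧ ((ε ≤ ∑ i, X i a - l' a ∧ ε ≤ u' a - ∑ i, X i a) ∧
      (ε ≤ ∑ i, X i b - l' b ∧ ε ≤ u' b - ∑ i, X i b)) := by
    refine ⟨min (min (∑ i, X i a - l' a) (u' a - ∑ i, X i a))
      (min (∑ i, X i b - l' b) (u' b - ∑ i, X i b)), ?_, ?_⟩
    · simp only [lt_min_iff, sub_pos]
      exact ⟨⟨ha1, ha2⟩, hb1, hb2⟩
    · simp
  obtain ⟨⟨e1, e2⟩, e3, e4⟩ := hε'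
  have hla := hl' a
  have hlb := hl' b
  have mem : ∀ t : ℝ, -ε ≤ t → t ≤ ε → transferMass X a b t ∈
      {Y : Matrix (Fin m) (Fin n) ℝ |
        (∀ i j, 0 ≤ Y i j) ∧
        (∀ i, l i ≤ ∑ j, Y i j ∧ ∑ j, Y i j ≤ u i) ∧
        (∀ j, l' j ≤ ∑ i, Y i j ∧ ∑ i, Y i j ≤ u' j) ∧
        (L ≤ ∑ i, ∑ j, Y i j ∧ ∑ i, ∑ j, Y i j ≤ U) ∧
        Y.rank ≤ 1} := by
    intro t ht1 ht2
    refine ⟨transferMass_nonneg X hrk h0 a b hab t hca (by linarith) (by linarith), ?_, ?_, ?_,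
      (rank_transferMass_le X a b t).trans hrk⟩
    · simpa only [sum_row_transferMass] using hr
    · intro j
      rw [sum_col_transferMass X a b t hca, transferDir]
      by_cases hja : j = a
      · subst hja
        simp only [hab, if_true, if_false]
        constructor <;> linarith
      · by_cases hjb : j = b
        · subst hjb
          simp only [hja, if_true, if_false]
          constructor <;> linarith
        · simpa [hja, hjb] using hc j
    · simpa only [sum_row_transferMass] using ht
  have heq := hext _ (mem ε (by linarith) le_rfl) _ (mem (-ε) le_rfl (by linarith))
    ⟨1 / 2, 1 / 2, by norm_num, by norm_num, by norm_num, by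
      ext i j
      simp only [transferMass, Matrix.add_apply, Matrix.smul_apply, Matrix.of_apply, smul_eq_mul]
      ring⟩
  -- The sum of column `a` has grown by `ε > 0`, so the perturbed matrix is not `X`.
  have hsum := sum_col_transferMass X a b ε hca a
  rw [heq] at hsum
  simp [transferDir, hab] at hsum
  linarith
end

section
/- Let X be an extreme point of the set T̃(l,u,l',u',L,U). Then there exist a row index i₀ and a column index j₀ such that for every row index i ≠ i₀ one has Σ_{j=1}^n x_{ij} ∈ {l_i, u_i}, and for every column index j ≠ j₀ one has Σ_{i=1}^m x_{ij} ∈ {l'_j, u'_j}. -/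
/-!
A nonnegative matrix of rank at most one and positive total is determined by its row sums `r` and a
probability vector `q`: `X i j = r i * q j`. Column sums are `(∑ i, r i) * q j`, so they depend on
`r` only through its total. If two rows `i ≠ k` had sums strictly between their bounds, moving a
small amount `t` of row mass from `k` to `i`, or from `i` to `k`, while keeping `q` fixed would
produce two distinct feasible matrices of rank at most one with midpoint `X`
(`row_at_bound_of_ne`). Hence at most one row sum of an extreme point avoids its bounds; transposing
gives the same for columns.
-/

/-- The nonnegative `m × n` matrices of rank at most one whose row sums, column sums and total
lie in the prescribed intervals. -/
def rankOneTransport {m n : ℕ} (l u : Fin m → ℝ) (l' u' : Fin n → ℝ) (L U : ℝ) :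
    Set (Matrix (Fin m) (Fin n) ℝ) :=
  {Y | (∀ i j, 0 ≤ Y i j) ∧
    (∀ i, l i ≤ ∑ j, Y i j ∧ ∑ j, Y i j ≤ u i) ∧
    (∀ j, l' j ≤ ∑ i, Y i j ∧ ∑ i, Y i j ≤ u' j) ∧
    (L ≤ ∑ i, ∑ j, Y i j ∧ ∑ i, ∑ j, Y i j ≤ U) ∧
    Y.rank ≤ 1}

/-- A matrix of rank at most one with a nonzero row sum is the outer product of its row sums with
that row, normalized to sum `1`. -/
lemma eq_rowSum_mul_of_rank_le_one {m n : ℕ} {X : Matrix (Fin m) (Fin n) ℝ} (hX : X.rank ≤ 1)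
    {k : Fin m} (hk : ∑ j, X k j ≠ 0) (i : Fin m) (j : Fin n) :
    X i j = (∑ j', X i j') * (X k j / ∑ j', X k j') := by
  rw [Matrix.rank_eq_finrank_span_row, finrank_le_one_iff] at hX
  obtain ⟨v, hv⟩ := hX
  have hrow : ∀ i, ∃ c : ℝ, ∀ j, X i j = c * v.1 j := fun i ↦ by
    obtain ⟨c, hc⟩ := hv ⟨X.row i, Submodule.subset_span ⟨i, rfl⟩⟩
    refine ⟨c, fun j ↦ ?_⟩
    have := congrFun (congrArg Subtype.val hc) j
    exact this.symm
  choose c hc using hrow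
  simp only [hc, ← Finset.mul_sum] at hk ⊢
  have h1 : c k ≠ 0 := left_ne_zero_of_mul hk
  have h2 : ∑ j, v.1 j ≠ 0 := right_ne_zero_of_mul hk
  field_simp

lemma vecMulVec_mem_rankOneTransport {m n : ℕ} {l u : Fin m → ℝ} {l' u' : Fin n → ℝ} {L U : ℝ}
    {r : Fin m → ℝ} {q : Fin n → ℝ} (hq : ∀ j, 0 ≤ q j) (hq1 : ∑ j, q j = 1)
    (hr : ∀ i, 0 ≤ r i) (hlu : ∀ i, l i ≤ r i ∧ r i ≤ u i)
    (hlu' : ∀ j, l' j ≤ (∑ i, r i) * q j ∧ (∑ i, r i) * q j ≤ u' j)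
    (hLU : L ≤ ∑ i, r i ∧ ∑ i, r i ≤ U) :
    Matrix.vecMulVec r q ∈ rankOneTransport l u l' u' L U := by
  refine ⟨fun i j ↦ mul_nonneg (hr i) (hq j), ?_, ?_, ?_, Matrix.rank_vecMulVec_le r q⟩
  · simpa [Matrix.vecMulVec_apply, ← Finset.mul_sum, hq1] using hlu
  · simpa [Matrix.vecMulVec_apply, ← Finset.sum_mul] using hlu'
  · simpa [Matrix.vecMulVec_apply, ← Finset.mul_sum, hq1] using hLU

/-- Of two distinct rows of an extreme point, at least one has its sum at a bound. -/
lemma row_at_bound_of_ne {m n : ℕ} {l u : Fin m → ℝ} {l' u' : Fin n → ℝ} {L U : ℝ}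
    (hl : ∀ i, 0 ≤ l i) {X : Matrix (Fin m) (Fin n) ℝ}
    (hX : X ∈ Set.extremePoints ℝ (rankOneTransport l u l' u' L U)) {i k : Fin m} (hik : i ≠ k)
    (hi : ¬ (∑ j, X i j = l i ∨ ∑ j, X i j = u i)) :
    ∑ j, X k j = l k ∨ ∑ j, X k j = u k := by
  by_contra hk
  obtain ⟨⟨h0, hrow, hcol, htot, hrank⟩, hext⟩ := hX
  push Not at hi hk
  set r : Fin m → ℝ := fun a ↦ ∑ j, X a j with hr
  have hil : l i < r i := lt_of_le_of_ne (hrow i).1 hi.1.symm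
  have hiu : r i < u i := lt_of_le_of_ne (hrow i).2 hi.2
  have hkl : l k < r k := lt_of_le_of_ne (hrow k).1 hk.1.symm
  have hku : r k < u k := lt_of_le_of_ne (hrow k).2 hk.2
  have hri : 0 < r i := (hl i).trans_lt hil
  set q : Fin n → ℝ := fun j ↦ X i j / r i with hqdef
  have hq : ∀ j, 0 ≤ q j := fun j ↦ div_nonneg (h0 i j) hri.le
  have hq1 : ∑ j, q j = 1 := by
    rw [hqdef, ← Finset.sum_div]
    exact div_self hri.ne'
  have hXq : ∀ a j, X a j = r a * q j := eq_rowSum_mul_of_rank_le_one hrank hri.ne'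
  obtain ⟨t, ht, hti⟩ : ∃ t, 0 < t ∧ (t ≤ r i - l i ∧ t ≤ u i - r i) ∧
      (t ≤ r k - l k ∧ t ≤ u k - r k) := by
    refine ⟨min (min (r i - l i) (u i - r i)) (min (r k - l k) (u k - r k)), ?_, ?_⟩
    · simp [hil, hiu, hkl, hku]
    · simp
  obtain ⟨⟨ht1, ht2⟩, ht3, ht4⟩ := hti
  let d : Fin m → ℝ := Pi.single i 1 - Pi.single k 1
  have hdi : d i = 1 := by simp [d, hik]
  have hdk : d k = -1 := by simp [d, hik.symm]
  have hd : ∀ a, a ≠ i → a ≠ k → d a = 0 := fun a ha hb ↦ by simp [d, ha, hb]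
  have hdsum : ∑ a, d a = 0 := by simp [d, Finset.sum_sub_distrib]
  have key : ∀ s : ℝ, |s| ≤ t →
      Matrix.vecMulVec (r + s • d) q ∈ rankOneTransport l u l' u' L U := fun s hs ↦ by
    obtain ⟨hs1, hs2⟩ := abs_le.1 hs
    have hsum : ∑ a, (r + s • d) a = ∑ a, r a := by
      simp [Finset.sum_add_distrib, ← Finset.mul_sum, hdsum]
    have hb : ∀ a, l a ≤ (r + s • d) a ∧ (r + s • d) a ≤ u a := fun a ↦ by
      simp only [Pi.add_apply, Pi.smul_apply, smul_eq_mul]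
      rcases eq_or_ne a i with rfl | ha
      · rw [hdi]; constructor <;> linarith
      rcases eq_or_ne a k with rfl | hb
      · rw [hdk]; constructor <;> linarith
      rw [hd a ha hb, mul_zero, add_zero]
      exact hrow a
    refine vecMulVec_mem_rankOneTransport hq hq1 (fun a ↦ (hl a).trans (hb a).1) hb ?_ ?_
    · rw [hsum]
      simpa only [hXq, ← Finset.sum_mul] using hcol
    · rw [hsum]
      exact htot
  have hmid : X ∈ openSegment ℝ (Matrix.vecMulVec (r + t • d) q)
      (Matrix.vecMulVec (r + (-t) • d) q) := by
    refine ⟨1 / 2, 1 / 2, by norm_num, by norm_num, by norm_num, ?_⟩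
    ext a j
    simp only [Matrix.add_apply, Matrix.smul_apply, Matrix.vecMulVec_apply, Pi.add_apply,
      Pi.smul_apply, smul_eq_mul]
    rw [hXq a j]
    ring
  have heq := hext (key t (abs_of_pos ht).le) (key (-t) (by rw [abs_neg, abs_of_pos ht])) hmid
  -- Row `i` of the perturbed matrix sums to `r i + t`, so it differs from `X`.
  have hsum : ∑ j, Matrix.vecMulVec (r + t • d) q i j = r i := by rw [heq]
  simp [Matrix.vecMulVec_apply, ← Finset.mul_sum, hq1, hdi] at hsum
  exact ht.ne' hsum

lemma transpose_mem_rankOneTransport {m n : ℕ} {l u : Fin m → ℝ} {l' u' : Fin n → ℝ} {L U : ℝ}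
    {Y : Matrix (Fin m) (Fin n) ℝ} (hY : Y ∈ rankOneTransport l u l' u' L U) :
    Y.transpose ∈ rankOneTransport l' u' l u L U := by
  obtain ⟨h0, hrow, hcol, htot, hrank⟩ := hY
  refine ⟨fun i j ↦ h0 j i, hcol, hrow, ?_, by rwa [Matrix.rank_transpose]⟩
  have hcomm : ∑ j, ∑ i, Y i j = ∑ i, ∑ j, Y i j := Finset.sum_comm
  change L ≤ ∑ j, ∑ i, Y i j ∧ ∑ j, ∑ i, Y i j ≤ U
  rw [hcomm]
  exact htot

lemma transpose_mem_extremePoints {m n : ℕ} {l u : Fin m → ℝ} {l' u' : Fin n → ℝ} {L U : ℝ}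
    {X : Matrix (Fin m) (Fin n) ℝ}
    (hX : X ∈ Set.extremePoints ℝ (rankOneTransport l u l' u' L U)) :
    X.transpose ∈ Set.extremePoints ℝ (rankOneTransport l' u' l u L U) := by
  refine ⟨transpose_mem_rankOneTransport hX.1, fun Y hY Z hZ hmid ↦ ?_⟩
  obtain ⟨a, b, ha, hb, hab, h⟩ := hmid
  have := hX.2 (transpose_mem_rankOneTransport hY) (transpose_mem_rankOneTransport hZ)
    ⟨a, b, ha, hb, hab, by
      rw [← Matrix.transpose_smul, ← Matrix.transpose_smul, ← Matrix.transpose_add, h,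
        Matrix.transpose_transpose]⟩
  rw [← this, Matrix.transpose_transpose]

lemma exists_forall_ne_of_pairwise {m : ℕ} (hm : 0 < m) {P : Fin m → Prop}
    (h : ∀ i k, i ≠ k → ¬ P i → P k) : ∃ i₀, ∀ i, i ≠ i₀ → P i := by
  by_cases hP : ∀ i, P i
  · exact ⟨⟨0, hm⟩, fun i _ ↦ hP i⟩
  · obtain ⟨i₀, hi₀⟩ := not_forall.1 hP
    exact ⟨i₀, fun i hi ↦ h i₀ i hi.symm hi₀⟩


theorem extremePoint_rowsums_colsums_at_bounds_except_one
    (m n : ℕ) (hm : 0 < m) (hn : 0 < n)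
    (l u : Fin m → ℝ) (l' u' : Fin n → ℝ) (L U : ℝ)
    (hl : ∀ i, 0 ≤ l i) (hlu : ∀ i, l i ≤ u i)
    (hl' : ∀ j, 0 ≤ l' j) (hlu' : ∀ j, l' j ≤ u' j)
    (hL : 0 ≤ L) (hLU : L ≤ U)
    (X : Matrix (Fin m) (Fin n) ℝ)
    (hX : X ∈ Set.extremePoints ℝ
      {Y : Matrix (Fin m) (Fin n) ℝ |
        (∀ i j, 0 ≤ Y i j) ∧
        (∀ i, l i ≤ ∑ j, Y i j ∧ ∑ j, Y i j ≤ u i) ∧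
        (∀ j, l' j ≤ ∑ i, Y i j ∧ ∑ i, Y i j ≤ u' j) ∧
        (L ≤ ∑ i, ∑ j, Y i j ∧ ∑ i, ∑ j, Y i j ≤ U) ∧
        Y.rank ≤ 1}) :
    ∃ (i₀ : Fin m) (j₀ : Fin n),
      (∀ i, i ≠ i₀ → (∑ j, X i j = l i ∨ ∑ j, X i j = u i)) ∧
      (∀ j, j ≠ j₀ → (∑ i, X i j = l' j ∨ ∑ i, X i j = u' j)) := by
  obtain ⟨i₀, hi₀⟩ := exists_forall_ne_of_pairwise hm
    fun i k hik ↦ row_at_bound_of_ne (l := l) (u := u) hl hX (i := i) (k := k) hik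
  obtain ⟨j₀, hj₀⟩ := exists_forall_ne_of_pairwise hn
    fun j k hjk ↦ row_at_bound_of_ne (l := l') (u := u') hl'
      (transpose_mem_extremePoints hX) (i := j) (k := k) hjk
  exact ⟨i₀, j₀, hi₀, hj₀⟩
end

section
/- The convex hull of the set T̃(l,u,·,·,L,U) of nonnegative rank-at-most-one m×n matrices with row sums in [l_i,u_i] and overall sum in [L,U] equals the set of m×n real matrices X with nonnegative entries for which there exists a nonnegative vector t ∈ ℝ^n with Σ_{j=1}^n t_j = 1 such that l_i t_j ≤ x_{ij} ≤ u_i t_j for all i, j, and L t_j ≤ Σ_{i=1}^m x_{ij} ≤ U t_j for all j. -/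
/-!
Write a matrix of the right-hand side as `X = ∑ j, t j • Y j`, the sum over the `j` with `0 < t j`,
where `Y j` carries the vector `X · j / t j` in column `j` and zeros elsewhere. Each `Y j` has rank
at most one, and the bounds on column `j` of `X`, divided by `t j`, are exactly the bounds on the
row sums and the overall sum of `Y j`. Columns with `t j = 0` vanish because
`0 ≤ X i j ≤ u i * t j`.

Conversely the right-hand side is convex, so it only has to contain each rank-at-most-one `Y`
of the set. If `Y` has overall sum `S ≠ 0`, then each entry is the row sum times `t j`, where `t j`
is the sum of column `j` divided by `S` (`entry_mul_total_of_rank_le_one`), and the bounds on `Y`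
multiplied by `t j` are the required ones. If `S = 0`, then `Y = 0` and all lower bounds are zero,
so any `t` in the simplex will do.
-/

/-- In a matrix of rank at most one, entry times overall sum equals row sum times column sum. -/
theorem entry_mul_total_of_rank_le_one {m n : ℕ} (Y : Matrix (Fin m) (Fin n) ℝ)
    (h : Y.rank ≤ 1) (i : Fin m) (j : Fin n) :
    Y i j * ∑ a, ∑ b, Y a b = (∑ b, Y i b) * ∑ a, Y a j := by
  rw [Matrix.rank_eq_finrank_span_cols, finrank_le_one_iff] at h
  obtain ⟨v, hv⟩ := h
  -- Every column is a multiple of the single vector `v`.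
  have hcol : ∀ b, ∃ c : ℝ, ∀ a, Y a b = c * (v : Fin m → ℝ) a := by
    intro b
    obtain ⟨c, hc⟩ := hv ⟨Y.col b, Submodule.subset_span ⟨b, rfl⟩⟩
    refine ⟨c, fun a => ?_⟩
    have := congrFun (congrArg Subtype.val hc) a
    simpa using this.symm
  choose c hc using hcol
  simp only [hc, ← Finset.sum_mul, ← Finset.mul_sum]
  ring

theorem entry_eq_zero_of_total_eq_zero {m n : ℕ} (Y : Matrix (Fin m) (Fin n) ℝ)
    (h : ∀ i j, 0 ≤ Y i j) (h0 : ∑ a, ∑ b, Y a b = 0) (i : Fin m) (j : Fin n) : Y i j = 0 := by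
  have h1 := (Finset.sum_eq_zero_iff_of_nonneg
    (fun a _ => Finset.sum_nonneg fun b _ => h a b)).1 h0 i (Finset.mem_univ i)
  exact (Finset.sum_eq_zero_iff_of_nonneg (fun b _ => h i b)).1 h1 j (Finset.mem_univ j)

theorem convex_extended_formulation {m n : ℕ} (l u : Fin m → ℝ) (L U : ℝ) :
    Convex ℝ {X : Matrix (Fin m) (Fin n) ℝ |
      (∀ i j, 0 ≤ X i j) ∧
      ∃ t : Fin n → ℝ, (∀ j, 0 ≤ t j) ∧ (∑ j, t j = 1) ∧
        (∀ i j, l i * t j ≤ X i j ∧ X i j ≤ u i * t j) ∧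
        (∀ j, L * t j ≤ ∑ i, X i j ∧ ∑ i, X i j ≤ U * t j)} := by
  rintro X ⟨hX, t, ht, ht1, hb, hs⟩ Y ⟨hY, s, hs0, hs1, hb', hs'⟩ a b ha hb0 hab
  have e : ∀ i j, (a • X + b • Y) i j = a * X i j + b * Y i j := fun i j => rfl
  refine ⟨fun i j => ?_, fun j => a * t j + b * s j, fun j => ?_, ?_, fun i j => ?_, fun j => ?_⟩
  · rw [e]
    exact add_nonneg (mul_nonneg ha (hX i j)) (mul_nonneg hb0 (hY i j))
  · exact add_nonneg (mul_nonneg ha (ht j)) (mul_nonneg hb0 (hs0 j))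
  · rw [Finset.sum_add_distrib, ← Finset.mul_sum, ← Finset.mul_sum, ht1, hs1]
    linarith
  · rw [e]
    have h1 := mul_le_mul_of_nonneg_left (hb i j).1 ha
    have h2 := mul_le_mul_of_nonneg_left (hb i j).2 ha
    have h3 := mul_le_mul_of_nonneg_left (hb' i j).1 hb0
    have h4 := mul_le_mul_of_nonneg_left (hb' i j).2 hb0
    constructor <;> linarith
  · simp only [e, Finset.sum_add_distrib, ← Finset.mul_sum]
    have h1 := mul_le_mul_of_nonneg_left (hs j).1 ha
    have h2 := mul_le_mul_of_nonneg_left (hs j).2 ha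
    have h3 := mul_le_mul_of_nonneg_left (hs' j).1 hb0
    have h4 := mul_le_mul_of_nonneg_left (hs' j).2 hb0
    constructor <;> linarith

theorem convexHull_rowwise_extended_formulation
    (m n : ℕ) (hm : 0 < m) (hn : 0 < n)
    (l u : Fin m → ℝ) (L U : ℝ)
    (hl : ∀ i, 0 ≤ l i) (hlu : ∀ i, l i ≤ u i) (hu : ∀ i, 0 < u i)
    (hL : 0 ≤ L) (hLU : L ≤ U) :
    convexHull ℝ
      {Y : Matrix (Fin m) (Fin n) ℝ |
        (∀ i j, 0 ≤ Y i j) ∧ Y.rank ≤ 1 ∧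
        (∀ i, l i ≤ ∑ j, Y i j ∧ ∑ j, Y i j ≤ u i) ∧
        (L ≤ ∑ i, ∑ j, Y i j ∧ ∑ i, ∑ j, Y i j ≤ U)} =
    {X : Matrix (Fin m) (Fin n) ℝ |
      (∀ i j, 0 ≤ X i j) ∧
      ∃ t : Fin n → ℝ, (∀ j, 0 ≤ t j) ∧ (∑ j, t j = 1) ∧
        (∀ i j, l i * t j ≤ X i j ∧ X i j ≤ u i * t j) ∧
        (∀ j, L * t j ≤ ∑ i, X i j ∧ ∑ i, X i j ≤ U * t j)} := by
  apply Set.Subset.antisymm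
  · refine convexHull_min ?_ (convex_extended_formulation l u L U)
    rintro Y ⟨hY, hr, hrow, htot⟩
    refine ⟨hY, ?_⟩
    by_cases hS : ∑ a, ∑ b, Y a b = 0
    · have hz := entry_eq_zero_of_total_eq_zero Y hY hS
      have hsimplex : ∀ j, (0 : ℝ) ≤ (Pi.single ⟨0, hn⟩ 1 : Fin n → ℝ) j := fun j => by
        rw [Pi.single_apply]; split_ifs <;> norm_num
      refine ⟨Pi.single ⟨0, hn⟩ 1, hsimplex, by simp, fun i j => ?_, fun j => ?_⟩
      · have h1 := (hrow i).1
        simp only [hz, Finset.sum_const_zero] at h1 ⊢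
        exact ⟨mul_nonpos_of_nonpos_of_nonneg h1 (hsimplex j),
          mul_nonneg (hu i).le (hsimplex j)⟩
      · have h1 := htot.1
        simp only [hz, Finset.sum_const_zero] at h1 ⊢
        exact ⟨mul_nonpos_of_nonpos_of_nonneg h1 (hsimplex j),
          mul_nonneg (hL.trans hLU) (hsimplex j)⟩
    · have key := entry_mul_total_of_rank_le_one Y hr
      have hcomm : ∑ j, ∑ i, Y i j = ∑ a, ∑ b, Y a b := Finset.sum_comm
      have hS0 : 0 ≤ ∑ a, ∑ b, Y a b :=
        Finset.sum_nonneg fun a _ => Finset.sum_nonneg fun b _ => hY a b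
      set S := ∑ a, ∑ b, Y a b with hSdef
      have ht : ∀ j, 0 ≤ (∑ i, Y i j) / S := fun j =>
        div_nonneg (Finset.sum_nonneg fun i _ => hY i j) hS0
      refine ⟨fun j => (∑ i, Y i j) / S, ht, ?_, fun i j => ?_, fun j => ?_⟩
      · rw [← Finset.sum_div, hcomm, div_self hS]
      · have hent : Y i j = (∑ b, Y i b) * ((∑ a, Y a j) / S) := by
          rw [← mul_div_assoc, ← key, mul_div_cancel_right₀ _ hS]
        constructor
        · calc _ ≤ (∑ b, Y i b) * ((∑ a, Y a j) / S) :=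
                mul_le_mul_of_nonneg_right (hrow i).1 (ht j)
            _ = Y i j := hent.symm
        · calc Y i j = (∑ b, Y i b) * ((∑ a, Y a j) / S) := hent
            _ ≤ _ := mul_le_mul_of_nonneg_right (hrow i).2 (ht j)
      · have hent : S * ((∑ a, Y a j) / S) = ∑ i, Y i j := mul_div_cancel₀ _ hS
        constructor
        · exact (mul_le_mul_of_nonneg_right htot.1 (ht j)).trans_eq hent
        · exact hent.symm.trans_le (mul_le_mul_of_nonneg_right htot.2 (ht j))
  · rintro X ⟨hX, t, ht, ht1, hb, hs⟩
    let Y : Fin n → Matrix (Fin m) (Fin n) ℝ := fun j =>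
      Matrix.vecMulVec (fun i => X i j / t j) (Pi.single j 1)
    have hYe : ∀ j i b, Y j i b = X i j / t j * (Pi.single j 1 : Fin n → ℝ) b := fun _ _ _ => rfl
    have hYrow : ∀ j i, ∑ b, Y j i b = X i j / t j := fun j i => by
      simp only [hYe, ← Finset.mul_sum]
      simp
    have hXsum : X = ∑ j with 0 < t j, t j • Y j := by
      have hfull : ∑ j with 0 < t j, t j • Y j = ∑ j, t j • Y j := by
        refine Finset.sum_filter_of_ne fun j _ hne => (ht j).lt_of_ne' fun h0 => hne ?_
        rw [h0, zero_smul]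
      rw [hfull]
      ext i b
      rw [Matrix.sum_apply, Finset.sum_eq_single b]
      · rw [Matrix.smul_apply, hYe, Pi.single_eq_same, mul_one, smul_eq_mul]
        by_cases h0 : t b = 0
        · have h2 := (hb i b).2
          rw [h0, mul_zero] at h2
          rw [h0, zero_mul]
          exact le_antisymm h2 (hX i b)
        · rw [mul_div_cancel₀ _ h0]
      · intro j _ hj
        rw [Matrix.smul_apply, hYe, Pi.single_eq_of_ne' hj, mul_zero, smul_zero]
      · simp
    rw [hXsum]
    refine (convex_convexHull ℝ _).sum_mem (fun j _ => ht j) ?_ fun j hj => ?_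
    · rw [← ht1]
      exact Finset.sum_filter_of_ne fun j _ hne => (ht j).lt_of_ne' hne
    · have hj : 0 < t j := (Finset.mem_filter.1 hj).2
      refine subset_convexHull ℝ _ ⟨fun i b => ?_, Matrix.rank_vecMulVec_le _ _, fun i => ?_, ?_⟩
      · rw [hYe, Pi.single_apply]
        exact mul_nonneg (div_nonneg (hX i j) hj.le) (by split_ifs <;> norm_num)
      · rw [hYrow, le_div_iff₀ hj, div_le_iff₀ hj]
        exact hb i j
      · simp only [hYrow]
        rw [← Finset.sum_div, le_div_iff₀ hj, div_le_iff₀ hj]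
        exact hs j
end

section
/- An m×n real matrix X belongs to T̃(l,u,l',u',L,U) if and only if X has nonnegative entries, rank(X) ≤ 1, and there exist nonnegative vectors t ∈ ℝ^n and t' ∈ ℝ^m with Σ_{j=1}^n t_j = 1 and Σ_{i=1}^m t'_i = 1 such that for all i, j: l_i t_j ≤ x_{ij} ≤ u_i t_j, l'_j t'_i ≤ x_{ij} ≤ u'_j t'_i, L t_j ≤ Σ_{i'=1}^m x_{i'j} ≤ U t_j, L t'_i ≤ Σ_{j'=1}^n x_{ij'} ≤ U t'_i, and x_{ij} = t_j · Σ_{j'=1}^n x_{ij'} = t'_i · Σ_{i'=1}^m x_{i'j}. -/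
/-!
If `X` has nonnegative entries and rank at most one, then its `2 × 2` minors vanish, so with row sums
`R i`, column sums `C j` and total `S` one has `X i j * S = R i * C j`. When `S > 0`, the
normalized sums `t j = C j / S` and `t' i = R i / S` are weights with `X i j = t j * R i = t' i * C j`,
`C j = t j * S` and `R i = t' i * S`; every inequality on the right is then an inequality
on the left times a nonnegative weight. When `S = 0`, `X` vanishes and any weights work. Conversely,
summing the scaled inequalities against weights of total mass one recovers the unscaled ones.
-/

/-- The `2 × 2` minors of a matrix of rank at most one vanish: all columns are multiples of
one vector. -/
lemma minor_eq_of_rank_le_one {m n : ℕ} (X : Matrix (Fin m) (Fin n) ℝ) (h : X.rank ≤ 1)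
    (i i' : Fin m) (j j' : Fin n) : X i j * X i' j' = X i j' * X i' j := by
  rw [Matrix.rank, finrank_le_one_iff] at h
  obtain ⟨v, hv⟩ := h
  have key : ∀ j, ∃ c : ℝ, ∀ i, X i j = c * (v : Fin m → ℝ) i := by
    intro j
    obtain ⟨c, hc⟩ := hv ⟨X.mulVecLin (Pi.single j 1), LinearMap.mem_range_self _ _⟩
    refine ⟨c, fun i => ?_⟩
    have := congrFun (congrArg Subtype.val hc) i
    simpa using this.symm
  obtain ⟨c, hc⟩ := key j
  obtain ⟨d, hd⟩ := key j'
  rw [hc i, hc i', hd i, hd i']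
  ring

lemma mul_total_eq {m n : ℕ} (X : Matrix (Fin m) (Fin n) ℝ) (h : X.rank ≤ 1)
    (i : Fin m) (j : Fin n) :
    X i j * ∑ i', ∑ j', X i' j' = (∑ j', X i j') * ∑ i', X i' j := by
  rw [Finset.sum_mul_sum, Finset.sum_comm, Finset.mul_sum]
  refine Finset.sum_congr rfl fun i' _ => ?_
  rw [Finset.mul_sum]
  exact Finset.sum_congr rfl fun j' _ => minor_eq_of_rank_le_one X h i i' j j'

/-- Weights of total mass one turn bounds of the form `a * t k ≤ f k ≤ b * t k` into bounds
on the total. -/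
lemma bounds_of_weights {k : ℕ} {a b : ℝ} {t f : Fin k → ℝ} (ht : ∑ j, t j = 1)
    (h : ∀ j, a * t j ≤ f j ∧ f j ≤ b * t j) : a ≤ ∑ j, f j ∧ ∑ j, f j ≤ b := by
  constructor
  · calc a = ∑ j, a * t j := by rw [← Finset.mul_sum, ht, mul_one]
      _ ≤ _ := Finset.sum_le_sum fun j _ => (h j).1
  · calc ∑ j, f j ≤ ∑ j, b * t j := Finset.sum_le_sum fun j _ => (h j).2
      _ = b := by rw [← Finset.mul_sum, ht, mul_one]


theorem Ttilde_eq_Ttilde1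
    (m n : ℕ) (hm : 0 < m) (hn : 0 < n)
    (l u : Fin m → ℝ) (l' u' : Fin n → ℝ) (L U : ℝ)
    (hl : ∀ i, 0 ≤ l i) (hlu : ∀ i, l i ≤ u i)
    (hl' : ∀ j, 0 ≤ l' j) (hlu' : ∀ j, l' j ≤ u' j)
    (hL : 0 ≤ L) (hLU : L ≤ U)
    (X : Matrix (Fin m) (Fin n) ℝ) :
    ((∀ i j, 0 ≤ X i j) ∧
     (∀ i, l i ≤ ∑ j, X i j ∧ ∑ j, X i j ≤ u i) ∧
     (∀ j, l' j ≤ ∑ i, X i j ∧ ∑ i, X i j ≤ u' j) ∧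
     (L ≤ ∑ i, ∑ j, X i j ∧ ∑ i, ∑ j, X i j ≤ U) ∧
     X.rank ≤ 1)
    ↔
    ((∀ i j, 0 ≤ X i j) ∧ X.rank ≤ 1 ∧
     ∃ (t : Fin n → ℝ) (t' : Fin m → ℝ),
       (∀ j, 0 ≤ t j) ∧ (∀ i, 0 ≤ t' i) ∧
       (∑ j, t j = 1) ∧ (∑ i, t' i = 1) ∧
       (∀ i j, l i * t j ≤ X i j ∧ X i j ≤ u i * t j) ∧
       (∀ i j, l' j * t' i ≤ X i j ∧ X i j ≤ u' j * t' i) ∧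
       (∀ j, L * t j ≤ ∑ i', X i' j ∧ ∑ i', X i' j ≤ U * t j) ∧
       (∀ i, L * t' i ≤ ∑ j', X i j' ∧ ∑ j', X i j' ≤ U * t' i) ∧
       (∀ i j, X i j = t j * ∑ j', X i j' ∧ X i j = t' i * ∑ i', X i' j)) := by
  constructor
  · rintro ⟨h0, hr, hc, hs, hrank⟩
    refine ⟨h0, hrank, ?_⟩
    -- It suffices to find weights through which `X` and its marginals factor.
    suffices H : ∃ (t : Fin n → ℝ) (t' : Fin m → ℝ),
        (∀ j, 0 ≤ t j) ∧ (∀ i, 0 ≤ t' i) ∧ (∑ j, t j = 1) ∧ (∑ i, t' i = 1) ∧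
        (∀ j, ∑ i', X i' j = (∑ i, ∑ j, X i j) * t j) ∧
        (∀ i, ∑ j', X i j' = (∑ i, ∑ j, X i j) * t' i) ∧
        (∀ i j, X i j = t j * ∑ j', X i j' ∧ X i j = t' i * ∑ i', X i' j) by
      obtain ⟨t, t', ht, ht', hs1, hs1', hC, hR, hX⟩ := H
      refine ⟨t, t', ht, ht', hs1, hs1', fun i j => ?_, fun i j => ?_, fun j => ?_,
        fun i => ?_, hX⟩
      · rw [(hX i j).1, mul_comm (t j)]
        exact ⟨mul_le_mul_of_nonneg_right (hr i).1 (ht j),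
          mul_le_mul_of_nonneg_right (hr i).2 (ht j)⟩
      · rw [(hX i j).2, mul_comm (t' i)]
        exact ⟨mul_le_mul_of_nonneg_right (hc j).1 (ht' i),
          mul_le_mul_of_nonneg_right (hc j).2 (ht' i)⟩
      · rw [hC j]
        exact ⟨mul_le_mul_of_nonneg_right hs.1 (ht j),
          mul_le_mul_of_nonneg_right hs.2 (ht j)⟩
      · rw [hR i]
        exact ⟨mul_le_mul_of_nonneg_right hs.1 (ht' i),
          mul_le_mul_of_nonneg_right hs.2 (ht' i)⟩
    have hS0 : 0 ≤ ∑ i, ∑ j, X i j :=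
      Finset.sum_nonneg fun i _ => Finset.sum_nonneg fun j _ => h0 i j
    rcases hS0.eq_or_lt with hS | hS
    · have hX : ∀ i j, X i j = 0 := by
        intro i j
        have h1 := (Finset.sum_eq_zero_iff_of_nonneg
          (fun i _ => Finset.sum_nonneg fun j _ => h0 i j)).1 hS.symm i (Finset.mem_univ i)
        exact (Finset.sum_eq_zero_iff_of_nonneg (fun j _ => h0 i j)).1 h1 j (Finset.mem_univ j)
      -- For the zero matrix any weights do; point masses at the first indices are chosen.
      refine ⟨Pi.single ⟨0, hn⟩ 1, Pi.single ⟨0, hm⟩ 1, fun j => ?_, fun i => ?_, ?_, ?_, ?_, ?_, ?_⟩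
      · exact (Pi.single_nonneg.2 zero_le_one : (0 : Fin n → ℝ) ≤ _) j
      · exact (Pi.single_nonneg.2 zero_le_one : (0 : Fin m → ℝ) ≤ _) i
      all_goals simp [hX]
    · have hne := hS.ne'
      refine ⟨fun j => (∑ i, X i j) / ∑ i, ∑ j, X i j, fun i => (∑ j, X i j) / ∑ i, ∑ j, X i j,
        fun j => div_nonneg (Finset.sum_nonneg fun i _ => h0 i j) hS0,
        fun i => div_nonneg (Finset.sum_nonneg fun j _ => h0 i j) hS0, ?_, ?_,
        fun j => (mul_div_cancel₀ _ hne).symm, fun i => (mul_div_cancel₀ _ hne).symm,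
        fun i j => ⟨?_, ?_⟩⟩
      · rw [← Finset.sum_div, Finset.sum_comm, div_self hne]
      · rw [← Finset.sum_div, div_self hne]
      · rw [div_mul_eq_mul_div, eq_div_iff hne, mul_total_eq X hrank, mul_comm]
      · rw [div_mul_eq_mul_div, eq_div_iff hne, mul_total_eq X hrank]
  · rintro ⟨h0, hrank, t, t', -, -, ht, ht', hr, hc, -, hs, -⟩
    exact ⟨h0, fun i => bounds_of_weights ht (hr i),
      fun j => bounds_of_weights ht' fun i => hc i j, bounds_of_weights ht' hs, hrank⟩
end
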